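/- arXiv:1911.13059 — 6 statements merged into one kernel-verified Lean document; each statement's English description precedes it below -/
import Mathlib

section
/- Let q be a prime power, m a positive integer, θ a generator of Gal(F_{q^m}/F_q), g ∈ F_{q^m}^n, and k a positive integer. Then the F_{q^m}-dimension of the span of g, θ(g), ..., θ^{k-1}(g) (where θ is applied entrywise) equals min{k, rk_q(g)}, where rk_q(g) is the dimension over F_q of the F_q-span of the entries of g. -/
open Submodule

noncomputable section

variable {E : Type} [Field E]

instance (σ : E ≃+* E) : RingHomSurjective (σ : E →+* E) := ⟨σ.surjective⟩

/-- Entrywise application of a field automorphism to vectors, as a semilinear map. -/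
def entrywiseR {n : ℕ} (σ : E ≃+* E) :
    (Fin n → E) →ₛₗ[(σ : E →+* E)] (Fin n → E) where
  toFun v := fun i => σ (v i)
  map_add' x y := by funext i; simp
  map_smul' r x := by funext i; simp [smul_eq_mul, map_mul]

/-- Image of a code under entrywise application of a ring automorphism. -/
def mapCodeR {n : ℕ} (σ : E ≃+* E) (C : Submodule E (Fin n → E)) :
    Submodule E (Fin n → E) :=
  C.map (entrywiseR σ)

/-- Image of a code under entrywise application of an F-algebra automorphism. -/
def mapCode {F : Type} [Field F] [Algebra F E] {n : ℕ} (σ : E ≃ₐ[F] E)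
    (C : Submodule E (Fin n → E)) : Submodule E (Fin n → E) :=
  mapCodeR σ.toRingEquiv C

/-- Right action of a matrix over the base field on a code. -/
def matAct (F : Type) [Field F] [Algebra F E] {n : ℕ} (A : Matrix (Fin n) (Fin n) F)
    (C : Submodule E (Fin n → E)) : Submodule E (Fin n → E) :=
  C.map ((A.map (algebraMap F E)).vecMulLinear)

/-- Semilinear equivalence of rank-metric codes: C₁ = τ(C₂)·A. -/
def CodeEquiv (F : Type) [Field F] [Algebra F E] {n : ℕ}
    (C₁ C₂ : Submodule E (Fin n → E)) : Prop :=
  ∃ (τ : E ≃+* E) (A : Matrix (Fin n) (Fin n) F), IsUnit A ∧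
    C₁ = matAct F A (mapCodeR τ C₂)

/-- Gabidulin code. -/
def Gab {F : Type} [Field F] [Algebra F E] {n : ℕ} (θ : E ≃ₐ[F] E) (k : ℕ)
    (g : Fin n → E) : Submodule E (Fin n → E) :=
  Submodule.span E (Set.range fun j : Fin k => fun i => (θ ^ (j : ℕ)) (g i))

/-- Sum of the images of C under the first i+1 powers of σ. -/
def sumCode {F : Type} [Field F] [Algebra F E] {n : ℕ} (σ : E ≃ₐ[F] E) (i : ℕ)
    (C : Submodule E (Fin n → E)) : Submodule E (Fin n → E) :=
  ⨆ j : Fin (i + 1), mapCode (σ ^ (j : ℕ)) C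

/-- Intersection of the images of C under the first i+1 powers of σ. -/
def interCode {F : Type} [Field F] [Algebra F E] {n : ℕ} (σ : E ≃ₐ[F] E) (i : ℕ)
    (C : Submodule E (Fin n → E)) : Submodule E (Fin n → E) :=
  ⨅ j : Fin (i + 1), mapCode (σ ^ (j : ℕ)) C

/-- Dual code with respect to the standard inner product. -/
def dualCode {n : ℕ} (C : Submodule E (Fin n → E)) : Submodule E (Fin n → E) where
  carrier := {u | ∀ v ∈ C, ∑ i, u i * v i = 0}
  add_mem' := by
    intro a b ha hb v hv
    simp only [Set.mem_setOf_eq] at *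
    simp only [Pi.add_apply, add_mul, Finset.sum_add_distrib, ha v hv, hb v hv, add_zero]
  zero_mem' := by intro v hv; simp
  smul_mem' := by
    intro c a ha v hv
    simp only [Set.mem_setOf_eq] at *
    simp only [Pi.smul_apply, smul_eq_mul, mul_assoc, ← Finset.mul_sum, ha v hv, mul_zero]

/-- Twisted Gabidulin code. -/
def TGab {F : Type} [Field F] [Algebra F E] {n : ℕ} (θ : E ≃ₐ[F] E) (k : ℕ) (η : E)
    (g : Fin n → E) : Submodule E (Fin n → E) :=
  Submodule.span E
    (insert (fun i => g i + η * (θ ^ k) (g i))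
      (Set.range fun j : Fin (k - 1) => fun i => (θ ^ ((j : ℕ) + 1)) (g i)))

/-- Moore-type independence: columns of the Moore matrix. -/
theorem moore_cols {F : Type} [Field F] [Algebra F E] (θ : E ≃ₐ[F] E)
    (hfix : ∀ x : E, θ x = x → ∃ a : F, algebraMap F E a = x) :
    ∀ (r : ℕ) (b : Fin r → E), LinearIndependent F b → ∀ x : Fin r → E,
      (∀ j < r, ∑ i, x i * (θ ^ j) (b i) = 0) → x = 0 := by
  intro r
  induction r with
  | zero => intro b _ x _; exact Subsingleton.elim _ _
  | succ r ih =>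
    intro b hb x hx
    have hb' : LinearIndependent F (fun i : Fin r => b i.castSucc) :=
      hb.comp _ (Fin.castSucc_injective r)
    by_cases h0 : x (Fin.last r) = 0
    · have h1 : (fun i : Fin r => x i.castSucc) = 0 := by
        apply ih _ hb'
        intro j hj
        have := hx j (by omega)
        rw [Fin.sum_univ_castSucc, h0, zero_mul, add_zero] at this
        exact this
      funext i
      refine Fin.lastCases h0 (fun i => ?_) i
      exact congrFun h1 i
    · exfalso
      have hz : ∀ j < r + 1, ∑ i : Fin r, (x i.castSucc / x (Fin.last r)) * (θ ^ j) (b i.castSucc)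
          + (θ ^ j) (b (Fin.last r)) = 0 := by
        intro j hj
        have := hx j hj
        rw [Fin.sum_univ_castSucc] at this
        have h2 : ∑ i : Fin r, (x i.castSucc / x (Fin.last r)) * (θ ^ j) (b i.castSucc)
          = (∑ i : Fin r, x i.castSucc * (θ ^ j) (b i.castSucc)) / x (Fin.last r) := by
          rw [Finset.sum_div]
          exact Finset.sum_congr rfl fun i _ => by ring
        rw [h2]
        field_simp
        rw [this, mul_zero]
      generalize hzz : (fun i : Fin r => x i.castSucc / x (Fin.last r)) = z at *
      have hzi : ∀ i : Fin r, x i.castSucc / x (Fin.last r) = z i := fun i => congrFun hzz i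
      simp only [hzi] at hz
      have hw : (fun i => θ.symm (z i) - z i) = 0 := by
        apply ih _ hb'
        intro j hj
        have h1 := congrArg θ.symm (hz (j + 1) (by omega))
        have h2 := hz j (by omega)
        have h3 : ∀ y, θ.symm ((θ ^ (j + 1)) y) = (θ ^ j) y := by
          intro y
          rw [pow_succ', AlgEquiv.mul_apply, AlgEquiv.symm_apply_apply]
        simp only [map_add, map_sum, map_mul, map_zero, h3] at h1
        simp only [sub_mul, Finset.sum_sub_distrib]
        linear_combination h1 - h2
      have hF : ∀ i, ∃ a : F, algebraMap F E a = z i := by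
        intro i
        apply hfix
        have h1 : θ.symm (z i) - z i = 0 := congrFun hw i
        have h2 := sub_eq_zero.1 h1
        rw [AlgEquiv.symm_apply_eq] at h2
        exact h2.symm
      choose a ha using hF
      have h0 := hz 0 (by omega)
      rw [Fintype.linearIndependent_iff] at hb
      have := hb (Fin.snoc a 1) (by
        rw [Fin.sum_univ_castSucc]
        simpa [Algebra.smul_def, ha] using h0) (Fin.last r)
      simp at this

/-- Rows of the Moore matrix. -/
theorem moore_rows {F : Type} [Field F] [Algebra F E] (θ : E ≃ₐ[F] E)
    (hfix : ∀ x : E, θ x = x → ∃ a : F, algebraMap F E a = x)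
    (r : ℕ) (b : Fin r → E) (hb : LinearIndependent F b) :
    LinearIndependent E (fun j : Fin r => fun i : Fin r => (θ ^ (j : ℕ)) (b i)) := by
  have h : LinearIndependent E
      (Matrix.of (fun j : Fin r => fun i : Fin r => (θ ^ (j : ℕ)) (b i))).col := by
    rw [Fintype.linearIndependent_iff]
    intro x hx
    have := moore_cols θ hfix r b hb x (fun j hj => by
      have := congrFun hx ⟨j, hj⟩
      simpa [Matrix.col] using this)
    exact fun i => congrFun this i
  rw [Matrix.linearIndependent_cols_iff_isUnit] at h
  exact Matrix.linearIndependent_rows_iff_isUnit.2 h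

/-- the dimension of the span of `g, θ(g), ..., θ^{k-1}(g)` equals
`min k (rk_q g)`. -/
theorem stmt0 {F : Type} [Field F] [Algebra F E] [Fintype F] [Fintype E]
    (q m n k : ℕ) (hq : IsPrimePow q) (hm : 0 < m) (hk : 0 < k)
    (hF : Fintype.card F = q) (hE : Fintype.card E = q ^ m)
    (θ : E ≃ₐ[F] E) (hθ : ∀ τ : E ≃ₐ[F] E, τ ∈ Subgroup.zpowers θ)
    (g : Fin n → E) :
    Module.finrank E
        (Submodule.span E (Set.range fun j : Fin k => fun i => (θ ^ (j : ℕ)) (g i)))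
      = min k (Module.finrank F (Submodule.span F (Set.range g))) := by
  have hfix : ∀ x : E, θ x = x → ∃ a : F, algebraMap F E a = x := by
    intro x hx
    have : x ∈ Set.range (algebraMap F E) := by
      rw [IsGalois.mem_range_algebraMap_iff_fixed]
      intro f
      have hs : θ ∈ MulAction.stabilizer (E ≃ₐ[F] E) x := hx
      exact (Subgroup.zpowers_le.2 hs) (hθ f)
    exact this
  obtain ⟨b, hbs, hspan, hb⟩ := Submodule.exists_fun_fin_finrank_span_eq F (Set.range g)
  generalize Module.finrank F (Submodule.span F (Set.range g)) = r at *
  apply le_antisymm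
  · apply le_min
    · exact (finrank_range_le_card (R := E)
        (fun j : Fin k => fun i => (θ ^ (j : ℕ)) (g i))).trans_eq (Fintype.card_fin _)
    · have hg : ∀ i, ∃ a : Fin r → F, ∑ l, a l • b l = g i := by
        intro i
        rw [← Submodule.mem_span_range_iff_exists_fun, hspan]
        exact Submodule.subset_span ⟨i, rfl⟩
      choose a ha using hg
      have hle : Submodule.span E (Set.range fun j : Fin k => fun i => (θ ^ (j : ℕ)) (g i)) ≤
          Submodule.span E (Set.range fun l : Fin r => fun i => algebraMap F E (a i l)) := by
        rw [Submodule.span_le]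
        rintro _ ⟨j, rfl⟩
        rw [SetLike.mem_coe, Submodule.mem_span_range_iff_exists_fun]
        refine ⟨fun l => (θ ^ (j : ℕ)) (b l), ?_⟩
        funext i
        simp only [← ha, map_sum, map_smul, Finset.sum_apply, Pi.smul_apply, smul_eq_mul,
          Algebra.smul_def, map_mul, AlgEquiv.commutes]
        exact Finset.sum_congr rfl fun l _ => mul_comm _ _
      refine (Submodule.finrank_mono hle).trans ?_
      exact (finrank_range_le_card (R := E)
        (fun l : Fin r => fun i => algebraMap F E (a i l))).trans_eq (Fintype.card_fin _)
  · choose f hf using hbs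
    set s := min k r with hs
    have hsk : s ≤ k := min_le_left _ _
    have hsr : s ≤ r := min_le_right _ _
    have h1 := moore_rows θ hfix s (fun i => b (Fin.castLE hsr i))
      (hb.comp _ (Fin.castLE_injective hsr))
    have h2 : LinearIndependent E (fun j : Fin s => fun i => (θ ^ (j : ℕ)) (g i)) := by
      refine LinearIndependent.of_comp
        (LinearMap.funLeft E E (fun i : Fin s => f (Fin.castLE hsr i))) ?_
      convert h1 using 1
      funext j i
      simp [LinearMap.funLeft, hf]
    have h3 := finrank_span_eq_card h2
    rw [Fintype.card_fin] at h3
    rw [← h3]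
    apply Submodule.finrank_mono
    apply Submodule.span_mono
    rintro _ ⟨j, rfl⟩
    exact ⟨Fin.castLE hsk j, rfl⟩
end
end

section
/- Let C be an [n,k]_{q^m} code, σ ∈ Gal(F_{q^m}/F_q), and Δ_i^σ(C) := s_{i+1}^σ(C) − s_i^σ(C) where s_i^σ(C) = dim Σ_{j=0}^i σ^j(C). Then the sequence of increments is non-increasing: k ≥ Δ_0^σ(C) ≥ Δ_1^σ(C) ≥ ... ≥ Δ_{n-k}^σ(C) = 0. -/
open Submodule

noncomputable section

variable {E : Type} [Field E]

lemma mem_mapCode_aux {F : Type} [Field F] [Algebra F E] {n : ℕ} (σ : E ≃ₐ[F] E)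
    (C : Submodule E (Fin n → E)) (x : Fin n → E) :
    x ∈ mapCode σ C ↔ ∃ v ∈ C, (fun i => σ (v i)) = x := Iff.rfl

lemma mapCode_mono_aux {F : Type} [Field F] [Algebra F E] {n : ℕ} (σ : E ≃ₐ[F] E)
    {C D : Submodule E (Fin n → E)} (h : C ≤ D) : mapCode σ C ≤ mapCode σ D :=
  Submodule.map_mono h

lemma mapCode_mul_aux {F : Type} [Field F] [Algebra F E] {n : ℕ} (σ τ : E ≃ₐ[F] E)
    (C : Submodule E (Fin n → E)) : mapCode σ (mapCode τ C) = mapCode (σ * τ) C := by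
  ext x
  simp only [mem_mapCode_aux]
  constructor
  · rintro ⟨_, ⟨v, hv, rfl⟩, rfl⟩
    exact ⟨v, hv, rfl⟩
  · rintro ⟨v, hv, rfl⟩
    exact ⟨_, ⟨v, hv, rfl⟩, rfl⟩

lemma mapCode_one_aux {F : Type} [Field F] [Algebra F E] {n : ℕ}
    (C : Submodule E (Fin n → E)) : mapCode (1 : E ≃ₐ[F] E) C = C := by
  ext x
  simp only [mem_mapCode_aux]
  constructor
  · rintro ⟨v, hv, rfl⟩
    exact hv
  · intro hx
    exact ⟨x, hx, rfl⟩

lemma finrank_mapCode_aux {F : Type} [Field F] [Algebra F E] [Fintype E] {n : ℕ}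
    (σ : E ≃ₐ[F] E) (C : Submodule E (Fin n → E)) :
    Module.finrank E (mapCode σ C) = Module.finrank E C := by
  have h1 := Module.natCard_eq_pow_finrank (K := E) (V := mapCode σ C)
  have h2 := Module.natCard_eq_pow_finrank (K := E) (V := C)
  have hinj : Function.Injective (fun v : Fin n → E => fun i => σ (v i)) := by
    intro a b hab
    funext i
    exact σ.injective (congrFun hab i)
  have h3 : Nat.card (mapCode σ C) = Nat.card C :=
    Nat.card_image_of_injective hinj (C : Set (Fin n → E))
  have h4 : 1 < Nat.card E := Finite.one_lt_card
  rw [h1, h2] at h3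
  exact Nat.pow_right_injective h4 h3

lemma le_sumCode_aux {F : Type} [Field F] [Algebra F E] {n : ℕ} (σ : E ≃ₐ[F] E)
    (C : Submodule E (Fin n → E)) (i j : ℕ) (h : j ≤ i) :
    mapCode (σ ^ j) C ≤ sumCode σ i C :=
  le_iSup (fun j : Fin (i + 1) => mapCode (σ ^ (j : ℕ)) C) ⟨j, by omega⟩

lemma sumCode_mono_aux {F : Type} [Field F] [Algebra F E] {n : ℕ} (σ : E ≃ₐ[F] E)
    (C : Submodule E (Fin n → E)) (i : ℕ) : sumCode σ i C ≤ sumCode σ (i + 1) C :=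
  iSup_le fun j => le_sumCode_aux σ C _ _ (by omega)

lemma mapCode_sumCode_le_aux {F : Type} [Field F] [Algebra F E] {n : ℕ} (σ : E ≃ₐ[F] E)
    (C : Submodule E (Fin n → E)) (i : ℕ) :
    mapCode σ (sumCode σ i C) ≤ sumCode σ (i + 1) C := by
  have : mapCode σ (sumCode σ i C) = ⨆ j : Fin (i + 1), mapCode σ (mapCode (σ ^ (j : ℕ)) C) :=
    Submodule.map_iSup _ _
  rw [this]
  refine iSup_le fun j => ?_
  rw [mapCode_mul_aux, ← pow_succ']
  exact le_sumCode_aux σ C _ _ (by omega)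

lemma sumCode_le_aux {F : Type} [Field F] [Algebra F E] {n : ℕ} (σ : E ≃ₐ[F] E)
    (C : Submodule E (Fin n → E)) (i : ℕ) :
    sumCode σ (i + 1) C ≤ sumCode σ i C ⊔ mapCode σ (sumCode σ i C) := by
  refine iSup_le fun j => ?_
  obtain ⟨j, hj⟩ := j
  rcases Nat.lt_or_ge j (i + 1) with h | h
  · exact le_sup_of_le_left (le_sumCode_aux σ C i j (by omega))
  · obtain rfl : j = i + 1 := by omega
    refine le_sup_of_le_right ?_
    change mapCode (σ ^ (i + 1)) C ≤ _
    rw [pow_succ', ← mapCode_mul_aux]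
    exact mapCode_mono_aux σ (le_sumCode_aux σ C _ _ le_rfl)

lemma sumCode_zero_aux {F : Type} [Field F] [Algebra F E] {n : ℕ} (σ : E ≃ₐ[F] E)
    (C : Submodule E (Fin n → E)) : sumCode σ 0 C = C := by
  apply le_antisymm
  · refine iSup_le fun j => ?_
    have : (j : ℕ) = 0 := by omega
    rw [this, pow_zero, mapCode_one_aux]
  · have := le_sumCode_aux σ C 0 0 le_rfl
    rwa [pow_zero, mapCode_one_aux] at this

lemma finrank_submod_aux {F : Type} [Field F] [Algebra F E] [Fintype E] {n : ℕ} (σ : E ≃ₐ[F] E)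
    (C : Submodule E (Fin n → E)) (i : ℕ) :
    Module.finrank E (sumCode σ (i + 2) C) + Module.finrank E (sumCode σ i C) ≤
      Module.finrank E (sumCode σ (i + 1) C) + Module.finrank E (sumCode σ (i + 1) C) := by
  have h := Submodule.finrank_sup_add_finrank_inf_eq (sumCode σ (i + 1) C)
    (mapCode σ (sumCode σ (i + 1) C))
  have h1 := Submodule.finrank_mono (sumCode_le_aux σ C (i + 1))
  have h2 := Submodule.finrank_mono (le_inf (mapCode_sumCode_le_aux σ C i)
    (mapCode_mono_aux σ (sumCode_mono_aux σ C i)))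
  rw [finrank_mapCode_aux] at h h2
  change Module.finrank E (sumCode σ (i + 2) C) ≤ _ at h1
  omega

/-- the sum-increment sequence is non-increasing:
`k ≥ Δ_0 ≥ Δ_1 ≥ ... ≥ Δ_{n-k} = 0`. -/
theorem stmt8 {F : Type} [Field F] [Algebra F E] [Fintype F] [Fintype E]
    (q m n k : ℕ) (hq : IsPrimePow q)
    (hF : Fintype.card F = q) (hE : Fintype.card E = q ^ m)
    (hkn : k ≤ n)
    (σ : E ≃ₐ[F] E) (C : Submodule E (Fin n → E)) (hC : Module.finrank E C = k) :
    (Module.finrank E (sumCode σ 1 C) - Module.finrank E (sumCode σ 0 C) ≤ k) ∧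
      (∀ i : ℕ,
        Module.finrank E (sumCode σ (i + 2) C) - Module.finrank E (sumCode σ (i + 1) C) ≤
          Module.finrank E (sumCode σ (i + 1) C) - Module.finrank E (sumCode σ i C)) ∧
      Module.finrank E (sumCode σ (n - k + 1) C) -
          Module.finrank E (sumCode σ (n - k) C) = 0 := by
  have hmono : ∀ i, Module.finrank E (sumCode σ i C) ≤ Module.finrank E (sumCode σ (i + 1) C) :=
    fun i => Submodule.finrank_mono (sumCode_mono_aux σ C i)
  have hsub := finrank_submod_aux σ C
  have h0 : Module.finrank E (sumCode σ 0 C) = k := by rw [sumCode_zero_aux, hC]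
  have hle : ∀ i, Module.finrank E (sumCode σ i C) ≤ n := fun i => by
    simpa using Submodule.finrank_le (sumCode σ i C)
  refine ⟨?_, fun i => ?_, ?_⟩
  · have h1 := Submodule.finrank_mono (sumCode_le_aux σ C 0)
    have h2 := Submodule.finrank_add_le_finrank_add_finrank (sumCode σ 0 C)
      (mapCode σ (sumCode σ 0 C))
    rw [finrank_mapCode_aux] at h2
    change Module.finrank E (sumCode σ 1 C) ≤ _ at h1
    omega
  · have := hsub i
    have := hmono i
    have := hmono (i + 1)
    omega
  · obtain ⟨s, hs⟩ : ∃ s : ℕ → ℕ, ∀ i, Module.finrank E (sumCode σ i C) = s i :=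
      ⟨_, fun _ => rfl⟩
    simp only [hs] at hmono hsub h0 hle ⊢
    by_contra hne
    have hpos : s (n - k) + 1 ≤ s (n - k + 1) := by omega
    have hback : ∀ d, d ≤ n - k → s (n - k - d) + 1 ≤ s (n - k - d + 1) := by
      intro d
      induction d with
      | zero => intro _; exact hpos
      | succ d ih =>
        intro hd
        have h1 := ih (by omega)
        have h2 := hsub (n - k - (d + 1))
        have e : n - k - d = n - k - (d + 1) + 1 := by omega
        rw [e] at h1
        change s (n - k - (d + 1) + 1) + 1 ≤ s (n - k - (d + 1) + 2) at h1
        omega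
    have hgrow : ∀ i, i ≤ n - k + 1 → k + i ≤ s i := by
      intro i
      induction i with
      | zero => intro _; omega
      | succ i ih =>
        intro hi
        have h1 := ih (by omega)
        have h2 := hback (n - k - i) (by omega)
        have e : n - k - (n - k - i) = i := by omega
        rw [e] at h2
        omega
    have h1 := hgrow _ le_rfl
    have h2 := hle (n - k + 1)
    omega
end
end

section
/- Let C = G_{k,θ}(g) be a θ-Gabidulin code (θ a generator of Gal(F_{q^m}/F_q), g ∈ F_{q^m}^n with rk_q(g) = n, 1 ≤ k ≤ n ≤ m). For integers i ≥ 0 and 0 ≤ r ≤ k, the sum S_i^{θ^r}(C) = Σ_{j=0}^i θ^{rj}(C) equals ⟨g, θ(g), ..., θ^{min(k+ir,n)-1}(g)⟩_{F_{q^m}}, and hence has dimension min{k + ir, n}. -/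
open Submodule

noncomputable section

variable {E : Type} [Field E]

theorem Gab_mem {F : Type} [Field F] [Algebra F E] {n : ℕ} (θ : E ≃ₐ[F] E) (g : Fin n → E)
    {j t : ℕ} (h : j < t) : (fun i => (θ ^ j) (g i)) ∈ Gab θ t g :=
  Submodule.subset_span ⟨⟨j, h⟩, rfl⟩

theorem Gab_le {F : Type} [Field F] [Algebra F E] {n : ℕ} (θ : E ≃ₐ[F] E) (g : Fin n → E)
    {t : ℕ} {W : Submodule E (Fin n → E)} (h : ∀ j < t, (fun i => (θ ^ j) (g i)) ∈ W) :
    Gab θ t g ≤ W := by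
  refine Submodule.span_le.2 ?_
  rintro _ ⟨j, rfl⟩
  exact h j j.2

theorem Gab_mono {F : Type} [Field F] [Algebra F E] {n : ℕ} (θ : E ≃ₐ[F] E) (g : Fin n → E)
    {s t : ℕ} (h : s ≤ t) : Gab θ s g ≤ Gab θ t g :=
  Gab_le θ g fun _ hj => Gab_mem θ g (hj.trans_le h)

theorem mapCode_Gab {F : Type} [Field F] [Algebra F E] {n : ℕ} (θ : E ≃ₐ[F] E) (g : Fin n → E)
    (s t : ℕ) : mapCode (θ ^ s) (Gab θ t g) =
      Submodule.span E (Set.range fun j : Fin t => fun i => (θ ^ (s + (j : ℕ))) (g i)) := by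
  unfold mapCode mapCodeR Gab
  rw [Submodule.map_span, ← Set.range_comp]
  congr 2
  funext j i
  change (θ ^ s) ((θ ^ (j : ℕ)) (g i)) = _
  rw [pow_add, AlgEquiv.mul_apply]

theorem Gab_stable {F : Type} [Field F] [Algebra F E] {n : ℕ} (θ : E ≃ₐ[F] E) (g : Fin n → E)
    {t : ℕ} (h : (fun i => (θ ^ t) (g i)) ∈ Gab θ t g) (j : ℕ) :
    (fun i => (θ ^ j) (g i)) ∈ Gab θ t g := by
  induction j with
  | zero =>
    rcases Nat.eq_zero_or_pos t with rfl | ht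
    · exact h
    · exact Gab_mem θ g ht
  | succ j ih =>
    have h1 : (fun i => (θ ^ (j + 1)) (g i)) ∈ mapCode (θ ^ 1) (Gab θ t g) := by
      refine ⟨_, ih, ?_⟩
      funext i
      change (θ ^ 1) ((θ ^ j) (g i)) = _
      rw [pow_one, pow_succ', AlgEquiv.mul_apply]
    rw [mapCode_Gab] at h1
    refine Submodule.span_le.2 ?_ h1
    rintro _ ⟨l, rfl⟩
    have hl := l.2
    rcases Nat.lt_or_ge (1 + (l : ℕ)) t with h2 | h2
    · exact Gab_mem θ g h2
    · have : 1 + (l : ℕ) = t := by omega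
      simp only [this]
      exact h

theorem eq_top_of_all {F : Type} [Field F] [Algebra F E] [Fintype F] [Fintype E] {n : ℕ}
    (θ : E ≃ₐ[F] E) (hθ : ∀ τ : E ≃ₐ[F] E, τ ∈ Subgroup.zpowers θ)
    (g : Fin n → E) (hg : LinearIndependent F g) (W : Submodule E (Fin n → E))
    (hW : ∀ j : ℕ, (fun i => (θ ^ j) (g i)) ∈ W) : W = ⊤ := by
  by_contra hne
  obtain ⟨f, hf0, hf⟩ := Submodule.exists_le_ker_of_lt_top W (lt_top_iff_ne_top.2 hne)
  apply hf0
  have hfv : ∀ v, f v = ∑ i, v i * f (Pi.single i 1) := by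
    intro v
    conv_lhs => rw [pi_eq_sum_univ' v]
    simp [map_sum, map_smul]
  have h1 : ∀ τ : E ≃ₐ[F] E, ∑ i, τ (g i) * f (Pi.single i 1) = 0 := by
    intro τ
    obtain ⟨j, rfl⟩ := (mem_powers_iff_mem_zpowers).2 (hθ τ)
    have := hf (hW j)
    rw [LinearMap.mem_ker, hfv] at this
    exact this
  haveI : FiniteDimensional F E := Module.Finite.of_finite
  have h2 : ∀ (i : Fin n) (c : E), Algebra.trace F E (c * f (Pi.single i 1)) = 0 := by
    intro i c
    refine (Fintype.linearIndependent_iff.1 hg)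
      (fun i => Algebra.trace F E (c * f (Pi.single i 1))) ?_ i
    simp only [Algebra.smul_def, trace_eq_sum_automorphisms, Finset.sum_mul]
    rw [Finset.sum_comm]
    refine Finset.sum_eq_zero fun τ _ => ?_
    have := congrArg (fun x => τ (c * x)) (h1 τ⁻¹)
    simp only [Finset.mul_sum, map_sum, map_mul, mul_zero, map_zero] at this
    rw [← this]
    refine Finset.sum_congr rfl fun i _ => ?_
    have h3 : τ (τ⁻¹ (g i)) = g i := by
      rw [← AlgEquiv.mul_apply, mul_inv_cancel, AlgEquiv.one_apply]
    rw [h3, map_mul]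
    ring
  have h4 : ∀ i, f (Pi.single i 1) = 0 := by
    intro i
    by_contra h
    have hs : Function.Surjective (Algebra.trace F E) := Algebra.trace_surjective F E
    obtain ⟨x, hx⟩ := hs 1
    have := h2 i (x * (f (Pi.single i 1))⁻¹)
    rw [mul_assoc, inv_mul_cancel₀ h, mul_one, hx] at this
    exact one_ne_zero this
  ext v
  simp [h4]

theorem Gab_finrank {F : Type} [Field F] [Algebra F E] [Fintype F] [Fintype E] {n : ℕ}
    (θ : E ≃ₐ[F] E) (hθ : ∀ τ : E ≃ₐ[F] E, τ ∈ Subgroup.zpowers θ)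
    (g : Fin n → E) (hg : LinearIndependent F g) (t : ℕ) (ht : t ≤ n) :
    Module.finrank E (Gab θ t g) = t := by
  have hle : ∀ t, Module.finrank E (Gab θ t g) ≤ t := by
    intro t
    have := finrank_range_le_card (R := E) (fun j : Fin t => fun i => (θ ^ (j : ℕ)) (g i))
    rw [Fintype.card_fin] at this
    exact this
  induction t with
  | zero => exact Nat.le_zero.1 (hle 0)
  | succ t ih =>
    have ih := ih (by omega)
    refine le_antisymm (hle _) ?_
    have hlt : Gab θ t g < Gab θ (t + 1) g := by
      refine lt_of_le_of_ne (Gab_mono θ g (Nat.le_succ t)) fun he => ?_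
      have h1 : (fun i => (θ ^ t) (g i)) ∈ Gab θ t g := by
        rw [he]; exact Gab_mem θ g (Nat.lt_succ_self t)
      have h2 := eq_top_of_all θ hθ g hg _ (Gab_stable θ g h1)
      rw [h2, finrank_top, Module.finrank_fin_fun] at ih
      omega
    have := Submodule.finrank_lt_finrank_of_lt hlt
    omega

theorem sumCode_Gab {F : Type} [Field F] [Algebra F E] {n : ℕ} (θ : E ≃ₐ[F] E) (g : Fin n → E)
    (k i r : ℕ) (hr : r ≤ k) :
    sumCode (θ ^ r) i (Gab θ k g) = Gab θ (k + i * r) g := by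
  unfold sumCode
  simp only [← pow_mul, mapCode_Gab]
  apply le_antisymm
  · refine iSup_le fun j => Submodule.span_le.2 ?_
    rintro _ ⟨l, rfl⟩
    refine Gab_mem θ g ?_
    have h1 : r * (j : ℕ) ≤ i * r := by
      rw [mul_comm]; exact Nat.mul_le_mul_right r (Nat.lt_succ_iff.1 j.2)
    have := l.2
    omega
  · refine Gab_le θ g fun s hs => ?_
    obtain ⟨j, l, hj, hl, rfl⟩ : ∃ j l, j < i + 1 ∧ l < k ∧ r * j + l = s := by
      rcases Nat.lt_or_ge s (i * r) with h | h
      · have hr0 : 0 < r := Nat.pos_of_ne_zero (by rintro rfl; simp at h)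
        exact ⟨s / r, s % r, ((Nat.div_lt_iff_lt_mul hr0).2 h).trans (Nat.lt_succ_self i),
          (Nat.mod_lt s hr0).trans_le hr, Nat.div_add_mod s r⟩
      · exact ⟨i, s - i * r, Nat.lt_succ_self i, by omega, by rw [mul_comm r i]; omega⟩
    exact Submodule.mem_iSup_of_mem (⟨j, hj⟩ : Fin (i + 1))
      (Submodule.subset_span ⟨⟨l, hl⟩, rfl⟩)

/-- for `0 ≤ r ≤ k`,
`S_i^{θ^r}(G_{k,θ}(g)) = ⟨g, θ(g), ..., θ^{min(k+ir,n)-1}(g)⟩`, of dimension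
`min (k+ir) n`. -/
theorem stmt10 {F : Type} [Field F] [Algebra F E] [Fintype F] [Fintype E]
    (q m n k i r : ℕ) (hq : IsPrimePow q)
    (hF : Fintype.card F = q) (hE : Fintype.card E = q ^ m)
    (hk : 1 ≤ k) (hkn : k ≤ n) (hnm : n ≤ m) (hr : r ≤ k)
    (θ : E ≃ₐ[F] E) (hθ : ∀ τ : E ≃ₐ[F] E, τ ∈ Subgroup.zpowers θ)
    (g : Fin n → E)
    (hg : Module.finrank F (Submodule.span F (Set.range g)) = n) :
    sumCode (θ ^ r) i (Gab θ k g) = Gab θ (min (k + i * r) n) g ∧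
      Module.finrank E (sumCode (θ ^ r) i (Gab θ k g)) = min (k + i * r) n := by
  have hgi : LinearIndependent F g := by
    rw [linearIndependent_iff_card_eq_finrank_span]
    simpa [Set.finrank] using hg.symm
  have h1 : sumCode (θ ^ r) i (Gab θ k g) = Gab θ (min (k + i * r) n) g := by
    rw [sumCode_Gab θ g k i r hr]
    rcases le_total (k + i * r) n with h | h
    · rw [min_eq_left h]
    · rw [min_eq_right h]
      have h2 : Gab θ n g = ⊤ := by
        apply Submodule.eq_top_of_finrank_eq
        rw [Gab_finrank θ hθ g hgi n le_rfl, Module.finrank_fin_fun]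
      exact le_antisymm (h2 ▸ le_top) (Gab_mono θ g h)
  refine ⟨h1, ?_⟩
  rw [h1]
  exact Gab_finrank θ hθ g hgi _ (min_le_right _ _)
end
end

section
/- Let C = H_{k,θ}[η](g) = ⟨g + ηθ^k(g), θ(g), ..., θ^{k-1}(g)⟩ be a twisted Gabidulin code with rk_q(g) = n, η ≠ 0, 2 ≤ k ≤ n−2, and let 1 ≤ r ≤ k−1. Then C + θ^r(C) = G_{k+r+1,θ}(g) = ⟨g, θ(g), ..., θ^{k+r}(g)⟩, provided k+r+1 ≤ n; in particular dim(C + θ^r(C)) = min{k+r+1, n}. -/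
open Submodule

noncomputable section

variable {E : Type} [Field E]

theorem abel_aux (c a : ℕ → E) (d : ℕ) :
    ∑ j ∈ Finset.range (d + 1), c j * a j =
      (∑ i ∈ Finset.range (d + 1), c i) * a d -
        ∑ j ∈ Finset.range d, (∑ i ∈ Finset.range (j + 1), c i) * (a (j + 1) - a j) := by
  induction d with
  | zero => simp
  | succ d ih =>
    rw [Finset.sum_range_succ, ih, Finset.sum_range_succ (fun j => _ * (a (j + 1) - a j)),
      Finset.sum_range_succ c (d + 1)]
    ring

theorem moore_aux {F : Type} [Field F] [Algebra F E] (θ : E ≃ₐ[F] E)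
    (hfix : ∀ z : E, θ z = z → ∃ f : F, algebraMap F E f = z) :
    ∀ (d : ℕ) (c x : ℕ → E), LinearIndependent F (fun i : Fin d => x i) →
      (∀ i < d, ∑ j ∈ Finset.range d, c j * (θ ^ j) (x i) = 0) → ∀ j < d, c j = 0 := by
  intro d
  induction d with
  | zero => intro c x _ _ j hj; omega
  | succ d ih =>
    intro c x hx hc
    have hxd : x d ≠ 0 := hx.ne_zero (Fin.last d)
    have hth : ∀ j, (θ ^ j) (x d) ≠ 0 := fun j => (map_ne_zero (θ ^ j)).mpr hxd
    let c' : ℕ → E := fun j => c j * (θ ^ j) (x d)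
    let y : ℕ → E := fun i => θ (x i / x d) - x i / x d
    have hS : ∑ j ∈ Finset.range (d + 1), c' j = 0 := hc d (by omega)
    have hind : LinearIndependent F (fun i : Fin d => y i) := by
      rw [Fintype.linearIndependent_iff] at hx ⊢
      intro α hα i
      have h1 : θ (∑ i : Fin d, α i • (x i / x d)) = ∑ i : Fin d, α i • (x i / x d) := by
        rw [← sub_eq_zero, map_sum, ← Finset.sum_sub_distrib, ← hα]
        refine Finset.sum_congr rfl fun i _ => ?_
        simp only [y, map_smul, smul_sub]
      obtain ⟨f, hf⟩ := hfix _ h1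
      have h2 := hx (Fin.snoc α (-f)) (by
        rw [Fin.sum_univ_castSucc]
        simp only [Fin.snoc_castSucc, Fin.snoc_last, Fin.val_castSucc, Fin.val_last]
        have h3 : ∑ i : Fin d, α i • x i = (∑ i : Fin d, α i • (x i / x d)) * x d := by
          rw [Finset.sum_mul]
          refine Finset.sum_congr rfl fun i _ => ?_
          rw [smul_mul_assoc, div_mul_cancel₀ _ hxd]
        rw [h3, ← hf, neg_smul, Algebra.smul_def, add_neg_cancel]) i.castSucc
      simpa using h2
    have hb := ih (fun j => ∑ i ∈ Finset.range (j + 1), c' i) y hind (by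
      intro i hi
      have h1 := abel_aux c' (fun j => (θ ^ j) (x i / x d)) d
      rw [hS, zero_mul, zero_sub] at h1
      have h2 : ∑ j ∈ Finset.range (d + 1), c' j * (θ ^ j) (x i / x d) = 0 := by
        rw [← hc i (by omega)]
        refine Finset.sum_congr rfl fun j _ => ?_
        simp only [c']
        rw [mul_assoc, ← map_mul, mul_div_cancel₀ _ hxd]
      rw [h2] at h1
      rw [← neg_eq_zero, h1]
      congr 1
      refine Finset.sum_congr rfl fun j _ => ?_
      simp only [y, map_sub, pow_succ, AlgEquiv.mul_apply])
    have hall : ∀ j ≤ d + 1, ∑ i ∈ Finset.range j, c' i = 0 := by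
      intro j hj
      rcases j with _ | j
      · simp
      · rcases Nat.lt_or_ge j d with h | h
        · exact hb j h
        · have : j = d := by omega
          rw [this]; exact hS
    intro j hj
    have h1 := hall (j + 1) (by omega)
    rw [Finset.sum_range_succ, hall j (by omega), zero_add] at h1
    exact (mul_eq_zero.mp h1).resolve_right (hth j)

theorem gab_finrank {F : Type} [Field F] [Algebra F E] {n d : ℕ} (hd : d ≤ n) (θ : E ≃ₐ[F] E)
    (hfix : ∀ z : E, θ z = z → ∃ f : F, algebraMap F E f = z)
    (g : Fin n → E) (hg : LinearIndependent F g) :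
    Module.finrank E (Gab θ d g) = d := by
  have h : LinearIndependent E (fun j : Fin d => fun i => (θ ^ (j : ℕ)) (g i)) := by
    rw [Fintype.linearIndependent_iff]
    intro c hc j
    let c' : ℕ → E := fun j => if h : j < d then c ⟨j, h⟩ else 0
    let x : ℕ → E := fun j => if h : j < n then g ⟨j, h⟩ else 0
    have hx : (fun i : Fin d => x i) = g ∘ Fin.castLE hd := by
      funext i
      have : (i : ℕ) < n := by omega
      simp [x, this]
      rfl
    have := moore_aux θ hfix d c' x (by
      rw [hx]; exact hg.comp _ (Fin.castLE_injective hd)) (by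
      intro i hi
      have h1 := congrFun hc ⟨i, by omega⟩
      have hin : i < n := by omega
      rw [Finset.sum_apply] at h1
      rw [Finset.sum_range]
      simpa [c', x, hin] using h1) j j.2
    simpa [c'] using this
  rw [Gab, finrank_span_eq_card h, Fintype.card_fin]

theorem tgab_sup {F : Type} [Field F] [Algebra F E] {n k r : ℕ}
    (hk2 : 2 ≤ k) (hr1 : 1 ≤ r) (hr2 : r ≤ k - 1)
    (θ : E ≃ₐ[F] E) (η : E) (hη : η ≠ 0) (g : Fin n → E) :
    TGab θ k η g ⊔ mapCode (θ ^ r) (TGab θ k η g) = Gab θ (k + r + 1) g := by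
  let v : ℕ → Fin n → E := fun j i => (θ ^ j) (g i)
  have hmap : mapCode (θ ^ r) (TGab θ k η g) = Submodule.span E
      (insert (v r + (θ ^ r) η • v (k + r)) (Set.range fun j : Fin (k - 1) => v (j + 1 + r))) := by
    rw [mapCode, mapCodeR, TGab, Submodule.map_span, Set.image_insert_eq, ← Set.range_comp]
    congr 2
    · funext i
      change (θ ^ r) (g i + η * (θ ^ k) (g i)) = (θ ^ r) (g i) + (θ ^ r) η * (θ ^ (k + r)) (g i)
      rw [map_add, map_mul, add_comm k r, pow_add θ r k, AlgEquiv.mul_apply]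
    · congr 1
      funext j i
      change (θ ^ r) ((θ ^ ((j : ℕ) + 1)) (g i)) = (θ ^ ((j : ℕ) + 1 + r)) (g i)
      rw [add_comm _ r, pow_add θ r, AlgEquiv.mul_apply]
  have hT : TGab θ k η g = Submodule.span E
      (insert (v 0 + η • v k) (Set.range fun j : Fin (k - 1) => v (j + 1))) := rfl
  have hG : Gab θ (k + r + 1) g = Submodule.span E
      (Set.range fun j : Fin (k + r + 1) => v j) := rfl
  rw [hmap, hT, hG]
  have hv : ∀ j < k + r + 1, v j ∈ Submodule.span E
      (Set.range fun j : Fin (k + r + 1) => v j) :=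
    fun j hj => Submodule.subset_span ⟨⟨j, hj⟩, rfl⟩
  apply le_antisymm
  · refine sup_le (Submodule.span_le.mpr ?_) (Submodule.span_le.mpr ?_)
    · rintro _ (rfl | ⟨j, rfl⟩)
      · exact add_mem (hv _ (by omega)) (Submodule.smul_mem _ _ (hv _ (by omega)))
      · exact hv _ (by omega)
    · rintro _ (rfl | ⟨j, rfl⟩)
      · exact add_mem (hv _ (by omega)) (Submodule.smul_mem _ _ (hv _ (by omega)))
      · exact hv _ (by omega)
  · set A := Submodule.span E
      (insert (v 0 + η • v k) (Set.range fun j : Fin (k - 1) => v (j + 1))) with hA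
    set B := Submodule.span E
      (insert (v r + (θ ^ r) η • v (k + r)) (Set.range fun j : Fin (k - 1) => v (j + 1 + r)))
      with hB
    have h1 : ∀ j, 1 ≤ j → j < k → v j ∈ A ⊔ B := fun j h h' =>
      Submodule.mem_sup_left (Submodule.subset_span (Or.inr ⟨⟨j - 1, by omega⟩, by
        change v (j - 1 + 1) = v j
        congr 1; omega⟩))
    have h2 : ∀ j, r + 1 ≤ j → j < k + r → v j ∈ A ⊔ B := fun j h h' =>
      Submodule.mem_sup_right (Submodule.subset_span (Or.inr ⟨⟨j - 1 - r, by omega⟩, by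
        change v (j - 1 - r + 1 + r) = v j
        congr 1; omega⟩))
    have h3 : v 0 + η • v k ∈ A ⊔ B :=
      Submodule.mem_sup_left (Submodule.subset_span (Or.inl rfl))
    have h4 : v r + (θ ^ r) η • v (k + r) ∈ A ⊔ B :=
      Submodule.mem_sup_right (Submodule.subset_span (Or.inl rfl))
    have h0 : v 0 ∈ A ⊔ B :=
      (Submodule.add_mem_iff_left _ (Submodule.smul_mem _ _ (h2 k (by omega) (by omega)))).mp h3
    have h5 : v (k + r) ∈ A ⊔ B := by
      have h6 := (Submodule.add_mem_iff_right _ (h1 r hr1 (by omega))).mp h4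
      have hne : (θ ^ r) η ≠ 0 := (map_ne_zero (θ ^ r)).mpr hη
      exact (Submodule.smul_mem_iff _ hne).mp h6
    refine Submodule.span_le.mpr ?_
    rintro _ ⟨⟨j, hj⟩, rfl⟩
    change v j ∈ A ⊔ B
    rcases Nat.eq_zero_or_pos j with rfl | hp
    · exact h0
    · rcases Nat.lt_or_ge j k with h | h
      · exact h1 j hp h
      · rcases Nat.lt_or_ge j (k + r) with h' | h'
        · exact h2 j (by omega) h'
        · have : j = k + r := by omega
          rw [this]; exact h5

/-- for `1 ≤ r ≤ k−1` and `k+r+1 ≤ n`,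
`H_{k,θ}[η](g) + θ^r(H_{k,θ}[η](g)) = G_{k+r+1,θ}(g)`,
of dimension `min (k+r+1) n`. -/
theorem stmt14 {F : Type} [Field F] [Algebra F E] [Fintype F] [Fintype E]
    (q m n k r : ℕ) (hq : IsPrimePow q)
    (hF : Fintype.card F = q) (hE : Fintype.card E = q ^ m)
    (hk2 : 2 ≤ k) (hkn : k ≤ n - 2) (hnm : n ≤ m)
    (hr1 : 1 ≤ r) (hr2 : r ≤ k - 1) (hkr : k + r + 1 ≤ n)
    (θ : E ≃ₐ[F] E) (hθ : ∀ τ : E ≃ₐ[F] E, τ ∈ Subgroup.zpowers θ)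
    (η : E) (hη : η ≠ 0)
    (g : Fin n → E)
    (hg : Module.finrank F (Submodule.span F (Set.range g)) = n) :
    TGab θ k η g ⊔ mapCode (θ ^ r) (TGab θ k η g) = Gab θ (k + r + 1) g ∧
      Module.finrank E (TGab θ k η g ⊔ mapCode (θ ^ r) (TGab θ k η g) :
          Submodule E (Fin n → E)) = min (k + r + 1) n := by
  have hsup := tgab_sup hk2 hr1 hr2 θ η hη g
  have hli : LinearIndependent F g := by
    rw [linearIndependent_iff_card_eq_finrank_span, Fintype.card_fin]
    exact hg.symm
  have hfix : ∀ z : E, θ z = z → ∃ f : F, algebraMap F E f = z := by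
    intro z hz
    have hall : ∀ τ : E ≃ₐ[F] E, τ z = z := by
      intro τ
      have hle : Subgroup.zpowers θ ≤ MulAction.stabilizer (E ≃ₐ[F] E) z := by
        rw [Subgroup.zpowers_le]
        exact hz
      exact hle (hθ τ)
    have : Module.Finite F E := inferInstance
    exact (IsGalois.mem_range_algebraMap_iff_fixed z).mpr hall
  refine ⟨hsup, ?_⟩
  rw [hsup, gab_finrank hkr θ hfix g hli, min_eq_left hkr]
end
end

section
/- Let u, v ∈ F_{q^m}^n with rk_q(u) = rk_q(v) = n, θ a generator of Gal(F_{q^m}/F_q), and 1 ≤ k ≤ n−1. Then G_{k,θ}(u) = G_{k,θ}(v) if and only if u = λv for some λ ∈ F_{q^m}^*. -/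
open Submodule

noncomputable section

variable {E : Type} [Field E]

theorem fixed_mem_range {F : Type} [Field F] [Algebra F E] [Fintype F] [Fintype E]
    (θ : E ≃ₐ[F] E) (hθ : ∀ τ : E ≃ₐ[F] E, τ ∈ Subgroup.zpowers θ) (x : E) (hx : θ x = x) :
    ∃ c : F, algebraMap F E c = x := by
  have hfin : FiniteDimensional F E := Module.Finite.of_finite
  have hgal : IsGalois F E := inferInstance
  have h : ∀ τ : E ≃ₐ[F] E, τ x = x := by
    intro τ
    have hs : Subgroup.zpowers θ ≤ MulAction.stabilizer (E ≃ₐ[F] E) x := by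
      rw [Subgroup.zpowers_le]
      exact hx
    exact hs (hθ τ)
  exact (IsGalois.mem_range_algebraMap_iff_fixed x).2 h

theorem moore_rows_s17 {F : Type} [Field F] [Algebra F E] [Fintype F] [Fintype E]
    (θ : E ≃ₐ[F] E) (hθ : ∀ τ : E ≃ₐ[F] E, τ ∈ Subgroup.zpowers θ) (n : ℕ) :
    ∀ (v d : Fin n → E), LinearIndependent F v →
      (∀ j < n, ∑ i, d i * (θ ^ j) (v i) = 0) → d = 0 := by
  induction n with
  | zero => intro v d _ _; exact Subsingleton.elim _ _
  | succ n ih =>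
    intro v d hv hd
    by_contra hne
    obtain ⟨i0, hi0⟩ : ∃ i, d i ≠ 0 := by
      by_contra hcon
      push Not at hcon
      exact hne (funext hcon)
    set e : Fin (n + 1) → E := fun i => (d i0)⁻¹ * d i with he
    have he0 : e i0 = 1 := by simp [he, hi0]
    have hesum : ∀ j < n + 1, ∑ i, e i * (θ ^ j) (v i) = 0 := by
      intro j hj
      have := hd j hj
      simp only [he, mul_assoc, ← Finset.mul_sum, this, mul_zero]
    have hfix : ∀ i, θ (e i) = e i := by
      have hw : LinearIndependent F (fun i : Fin n => θ (v (i0.succAbove i))) := by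
        have h1 := hv.comp _ (Fin.succAbove_right_injective (p := i0))
        exact h1.map' θ.toLinearMap (LinearMap.ker_eq_bot.2 θ.injective)
      have key := ih _ (fun i : Fin n => θ (e (i0.succAbove i)) - e (i0.succAbove i)) hw ?_
      · intro i
        by_cases hi : i = i0
        · rw [hi, he0, map_one]
        · obtain ⟨t, rfl⟩ := Fin.exists_succAbove_eq hi
          exact sub_eq_zero.1 (congrFun key t)
      · intro j hj
        have h1 := hesum (j + 1) (by omega)
        have h2 := congrArg θ (hesum j (by omega))
        rw [map_sum, map_zero] at h2
        have h3 : ∑ i, (θ (e i) - e i) * (θ ^ (j + 1)) (v i) = 0 := by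
          simp only [sub_mul, Finset.sum_sub_distrib, h1, sub_zero]
          rw [← h2]
          refine Finset.sum_congr rfl fun i _ => ?_
          rw [pow_succ', AlgEquiv.mul_apply, ← map_mul θ (e i)]
        rw [Fin.sum_univ_succAbove _ i0, he0] at h3
        simpa [pow_succ, AlgEquiv.mul_apply] using h3
    choose c hc using fun i => fixed_mem_range θ hθ (e i) (hfix i)
    have h0 := hesum 0 (by omega)
    have hc0 : ∑ i, c i • v i = 0 := by
      simpa [Algebra.smul_def, hc] using h0
    have := Fintype.linearIndependent_iff.1 hv c hc0 i0
    have h1 := hc i0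
    rw [this, he0, map_zero] at h1
    exact zero_ne_one h1

theorem moore_cols_s17 {F : Type} [Field F] [Algebra F E] [Fintype F] [Fintype E]
    (θ : E ≃ₐ[F] E) (hθ : ∀ τ : E ≃ₐ[F] E, τ ∈ Subgroup.zpowers θ) (n : ℕ)
    (v : Fin n → E) (hv : LinearIndependent F v) :
    LinearIndependent E (fun j : Fin n => fun i => (θ ^ (j : ℕ)) (v i)) := by
  let M : Matrix (Fin n) (Fin n) E := Matrix.of fun i j => (θ ^ (j : ℕ)) (v i)
  have hr : LinearIndependent E M.row := by
    rw [Fintype.linearIndependent_iff]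
    intro d hd i
    refine congrFun (moore_rows_s17 θ hθ n v d hv ?_) i
    intro j hj
    have := congrFun hd ⟨j, hj⟩
    simpa [M, Matrix.row] using this
  have hM := Matrix.linearIndependent_rows_iff_isUnit.1 hr
  exact Matrix.linearIndependent_cols_iff_isUnit.2 hM

theorem mem_Gab {F : Type} [Field F] [Algebra F E] {n : ℕ} (θ : E ≃ₐ[F] E) (k : ℕ)
    (g : Fin n → E) (j : ℕ) (hj : j < k) : (fun i => (θ ^ j) (g i)) ∈ Gab θ k g :=
  Submodule.subset_span ⟨⟨j, hj⟩, rfl⟩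

theorem Gab_smul_le {F : Type} [Field F] [Algebra F E] {n : ℕ} (θ : E ≃ₐ[F] E) (k : ℕ)
    (g : Fin n → E) (c : E) : Gab θ k (c • g) ≤ Gab θ k g := by
  refine Submodule.span_le.2 ?_
  rintro _ ⟨j, rfl⟩
  have := (Gab θ k g).smul_mem ((θ ^ (j : ℕ)) c) (mem_Gab θ k g j j.2)
  have heq : (fun i => (θ ^ (j : ℕ)) ((c • g) i)) =
      (θ ^ (j : ℕ)) c • (fun i => (θ ^ (j : ℕ)) (g i)) := by
    funext i
    exact map_mul (θ ^ (j : ℕ)) c (g i)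
  rw [← heq] at this
  exact this

/-- `G_{k,θ}(u) = G_{k,θ}(v)` iff `u = λ v` for some nonzero `λ`. -/
theorem stmt17 {F : Type} [Field F] [Algebra F E] [Fintype F] [Fintype E]
    (q m n k : ℕ) (hq : IsPrimePow q)
    (hF : Fintype.card F = q) (hE : Fintype.card E = q ^ m)
    (hk : 1 ≤ k) (hkn : k ≤ n - 1)
    (θ : E ≃ₐ[F] E) (hθ : ∀ τ : E ≃ₐ[F] E, τ ∈ Subgroup.zpowers θ)
    (u v : Fin n → E)
    (hu : Module.finrank F (Submodule.span F (Set.range u)) = n)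
    (hv : Module.finrank F (Submodule.span F (Set.range v)) = n) :
    Gab θ k u = Gab θ k v ↔ ∃ lam : E, lam ≠ 0 ∧ u = lam • v := by
  have hul : LinearIndependent F u :=
    linearIndependent_iff_card_eq_finrank_span.2 (by simpa [Set.finrank] using hu.symm)
  have hvl : LinearIndependent F v :=
    linearIndependent_iff_card_eq_finrank_span.2 (by simpa [Set.finrank] using hv.symm)
  constructor
  · intro h
    have hcols := moore_cols_s17 θ hθ n v hvl
    have hnot : (fun i => (θ ^ k) (v i)) ∉ Gab θ k v := by
      intro hmem
      have h1 := hcols.notMem_span_image (s := {j | (j : ℕ) < k}) (x := ⟨k, by omega⟩) (by simp)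
      apply h1
      refine Submodule.span_mono ?_ hmem
      rintro _ ⟨j, rfl⟩
      exact ⟨⟨j, by omega⟩, j.2, rfl⟩
    have humem : u ∈ Gab θ k v := by
      rw [← h]
      simpa using mem_Gab θ k u 0 (by omega)
    obtain ⟨a, ha⟩ := (Submodule.mem_span_range_iff_exists_fun E).1 humem
    have hui : ∀ i, u i = ∑ j : Fin k, a j * (θ ^ (j : ℕ)) (v i) := by
      intro i
      rw [← ha]
      simp
    have hz : ∀ j : Fin k, 0 < (j : ℕ) → a j = 0 := by
      by_contra hcon
      push Not at hcon
      obtain ⟨j1, hj1, hj1a⟩ := hcon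
      classical
      obtain ⟨J, hJ, hmax⟩ := Finset.exists_max_image
        (Finset.univ.filter fun j : Fin k => 0 < (j : ℕ) ∧ a j ≠ 0) (fun j => (j : ℕ))
        ⟨j1, by simp [hj1a]; exact hj1⟩
      simp only [Finset.mem_filter, Finset.mem_univ, true_and] at hJ hmax
      have hbig : ∀ j : Fin k, (J : ℕ) < j → a j = 0 := by
        intro j hj
        by_contra hne
        have := hmax j ⟨by omega, hne⟩
        omega
      apply hnot
      set s := k - (J : ℕ) with hs
      have hJk := J.2
      have h1 : (fun i => (θ ^ s) (u i)) ∈ Gab θ k v := by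
        rw [← h]
        exact mem_Gab θ k u s (by omega)
      have h2 : (fun i => (θ ^ s) (u i)) =
          ∑ j : Fin k, (θ ^ s) (a j) • (fun i => (θ ^ (s + (j : ℕ))) (v i)) := by
        funext i
        rw [hui i]
        simp [pow_add, AlgEquiv.mul_apply]
      rw [h2, ← Finset.add_sum_erase _ _ (Finset.mem_univ J)] at h1
      have h3 : ∑ j ∈ Finset.univ.erase J,
          (θ ^ s) (a j) • (fun i => (θ ^ (s + (j : ℕ))) (v i)) ∈ Gab θ k v := by
        refine Submodule.sum_mem _ fun j hj => ?_
        have hjJ : j ≠ J := (Finset.mem_erase.1 hj).1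
        rcases lt_or_ge (J : ℕ) (j : ℕ) with hlt | hge
        · rw [hbig j hlt, map_zero, zero_smul]
          exact Submodule.zero_mem _
        · have : (j : ℕ) ≠ J := fun hh => hjJ (Fin.ext hh)
          exact Submodule.smul_mem _ _ (mem_Gab θ k v _ (by omega))
      have h4 := (Submodule.add_mem_iff_left _ h3).1 h1
      have hne : (θ ^ s) (a J) ≠ 0 :=
        (map_ne_zero_iff (θ ^ s) (θ ^ s).injective).2 hJ.2
      have h5 := (Submodule.smul_mem_iff _ hne).1 h4
      have hsk : s + (J : ℕ) = k := by omega
      rwa [hsk] at h5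
    have huv : u = a ⟨0, by omega⟩ • v := by
      funext i
      rw [hui i, Finset.sum_eq_single (⟨0, by omega⟩ : Fin k)]
      · simp
      · intro j _ hj
        rw [hz j (Nat.pos_of_ne_zero fun hh => hj (Fin.ext hh)), zero_mul]
      · simp
    refine ⟨_, ?_, huv⟩
    intro h0
    rw [h0, zero_smul] at huv
    exact hul.ne_zero ⟨0, by omega⟩ (by rw [huv]; rfl)
  · rintro ⟨c, hc, rfl⟩
    refine le_antisymm (Gab_smul_le θ k v c) ?_
    have := Gab_smul_le θ k (c • v) c⁻¹
    rwa [smul_smul, inv_mul_cancel₀ hc, one_smul] at this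
end
end

section
/- Let 0 < k < n ≤ m, θ a generator of Gal(F_{q^m}/F_q), and C an [n,k]_{q^m} code with dim(C + θ(C)) = k+1. Then C = C_1 ⊕ G_{t,θ}(g) for some 0 ≤ t ≤ k and g ∈ F_{q^m}^n with rk_q(g) > t, where C_1 is an (k−t)-dimensional subcode admitting a basis of vectors of q-rank 1. -/
open Submodule

noncomputable section

variable {E : Type} [Field E]

lemma finrank_map_entry {n : ℕ} (σ : E ≃+* E) (C : Submodule E (Fin n → E)) :
    Module.finrank E (C.map (entrywiseR (n := n) σ)) = Module.finrank E C := by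
  have hinj : Function.Injective (entrywiseR (n := n) σ) := by
    intro x y h
    funext i
    exact σ.injective (congrFun h i)
  let j : C →+ (C.map (entrywiseR (n := n) σ)) :=
    { toFun := fun x => ⟨entrywiseR σ x.1, Submodule.mem_map_of_mem x.2⟩
      map_zero' := by ext1; simp
      map_add' := fun x y => by ext1; simp }
  have hj : Function.Bijective j := by
    constructor
    · intro x y h
      exact Subtype.ext (hinj (congrArg Subtype.val h))
    · rintro ⟨y, hy⟩
      obtain ⟨x, hx, rfl⟩ := hy
      exact ⟨⟨x, hx⟩, rfl⟩
  have := rank_eq_of_equiv_equiv (σ : E → E) (AddEquiv.ofBijective j hj) σ.bijective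
    (by
      intro r x
      apply Subtype.ext
      exact (entrywiseR (n := n) σ).map_smulₛₗ r x.1)
  unfold Module.finrank
  rw [this]

lemma gab_step {F : Type} [Field F] [Algebra F E] {n : ℕ} (θ : E ≃ₐ[F] E) (t : ℕ) (ht : 1 ≤ t)
    (g : Fin n → E) :
    Gab θ t g ⊔ (Gab θ t g).map (entrywiseR (n := n) θ.toRingEquiv) = Gab θ (t + 1) g := by
  have hT : ∀ j : ℕ, entrywiseR (n := n) θ.toRingEquiv (fun i => (θ ^ j) (g i))
      = fun i => (θ ^ (j + 1)) (g i) := by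
    intro j
    funext i
    rw [pow_succ']
    rfl
  apply le_antisymm
  · apply sup_le
    · apply Submodule.span_le.2
      rintro _ ⟨j, rfl⟩
      exact Submodule.subset_span ⟨⟨j, by omega⟩, rfl⟩
    · rw [Submodule.map_le_iff_le_comap]
      apply Submodule.span_le.2
      rintro _ ⟨j, rfl⟩
      rw [SetLike.mem_coe, Submodule.mem_comap, hT]
      exact Submodule.subset_span ⟨⟨j + 1, by omega⟩, rfl⟩
  · apply Submodule.span_le.2
    rintro _ ⟨⟨j, hj⟩, rfl⟩
    rcases j with _ | j
    · exact Submodule.mem_sup_left (Submodule.subset_span ⟨⟨0, by omega⟩, rfl⟩)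
    · apply Submodule.mem_sup_right
      refine ⟨_, Submodule.subset_span ⟨⟨j, by omega⟩, rfl⟩, ?_⟩
      exact hT j

lemma code_decomp {F : Type} [Field F] [Algebra F E] {n : ℕ} (θ : E ≃ₐ[F] E) (k : ℕ) :
    ∀ C : Submodule E (Fin n → E), Module.finrank E C = k →
      Module.finrank E ↥(C ⊔ C.map (entrywiseR (n := n) θ.toRingEquiv)) = k + 1 →
      ∃ (t : ℕ) (g : Fin n → E) (C₁ : Submodule E (Fin n → E)),
        C₁.map (entrywiseR (n := n) θ.toRingEquiv) ≤ C₁ ∧ 1 ≤ t ∧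
        C₁ ⊔ Gab θ t g = C ∧ Module.finrank E C₁ + t = k := by
  induction k with
  | zero =>
    intro C hC h
    rw [Submodule.finrank_eq_zero] at hC
    subst hC
    rw [Submodule.map_bot, sup_bot_eq, finrank_bot] at h
    omega
  | succ k ih =>
    intro C hC h
    set T := entrywiseR (n := n) θ.toRingEquiv with hTdef
    set D := C ⊓ C.comap T with hD
    have hDT : D.map T = C ⊓ C.map T := by
      ext x
      constructor
      · rintro ⟨y, hy, rfl⟩
        exact ⟨hy.2, Submodule.mem_map_of_mem hy.1⟩
      · rintro ⟨hx, y, hy, rfl⟩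
        exact ⟨y, ⟨hy, hx⟩, rfl⟩
    have hDk : Module.finrank E D = k := by
      have h1 := Submodule.finrank_sup_add_finrank_inf_eq C (C.map T)
      rw [← hDT, finrank_map_entry, finrank_map_entry] at h1
      omega
    have hDC : D ≤ C := inf_le_left
    have hDTC : D.map T ≤ C := hDT ▸ inf_le_left
    by_cases hs : D.map T ≤ D
    · have hne : D < C := lt_of_le_of_ne hDC (fun e => by rw [e] at hDk; omega)
      obtain ⟨g, hgC, hgD⟩ := SetLike.exists_of_lt hne
      refine ⟨1, g, D, hs, le_rfl, ?_, by omega⟩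
      have hg : g ∈ Gab θ 1 g := Submodule.subset_span ⟨0, by funext i; simp⟩
      have hle : D ⊔ Gab θ 1 g ≤ C := by
        apply sup_le hDC
        apply Submodule.span_le.2
        rintro _ ⟨j, rfl⟩
        have : (fun i => (θ ^ (j : ℕ)) (g i)) = g := by funext i; simp
        simpa [this] using hgC
      apply Submodule.eq_of_le_of_finrank_le hle
      have hlt : D < D ⊔ Gab θ 1 g :=
        lt_of_le_of_ne le_sup_left (fun e => hgD (e ▸ Submodule.mem_sup_right hg))
      have := Submodule.finrank_lt_finrank_of_lt hlt
      omega
    · have hlt : D < D ⊔ D.map T :=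
        lt_of_le_of_ne le_sup_left (fun e => hs (by rw [e]; exact le_sup_of_le_left (by rw [← e]; exact le_of_le_of_eq le_sup_right e.symm)))
      have h1 := Submodule.finrank_lt_finrank_of_lt hlt
      have hle : D ⊔ D.map T ≤ C := sup_le hDC hDTC
      have h2 := Submodule.finrank_mono hle
      have hDC' : D ⊔ D.map T = C := Submodule.eq_of_le_of_finrank_le hle (by omega)
      obtain ⟨t, g, C₁, hC1, ht, hsup, hdim⟩ := ih D hDk (by rw [hDC']; omega)
      refine ⟨t + 1, g, C₁, hC1, by omega, ?_, by omega⟩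
      rw [← hDC', ← hsup, Submodule.map_sup, ← gab_step θ t ht g, ← hTdef]
      rw [sup_sup_sup_comm, sup_eq_left.2 hC1]

lemma descent {F : Type} [Field F] [Algebra F E] [Fintype F] [Fintype E] {n : ℕ}
    (θ : E ≃ₐ[F] E) (hθ : ∀ τ : E ≃ₐ[F] E, τ ∈ Subgroup.zpowers θ)
    (C : Submodule E (Fin n → E))
    (hC : C.map (entrywiseR (n := n) θ.toRingEquiv) ≤ C) :
    Submodule.span E {v | v ∈ C ∧ ∃ w : Fin n → F, v = fun i => algebraMap F E (w i)} = C := by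
  have : FiniteDimensional F E := Module.Finite.of_finite
  have hpow : ∀ (j : ℕ) (c : Fin n → E), c ∈ C → (fun i => (θ ^ j) (c i)) ∈ C := by
    intro j
    induction j with
    | zero => intro c hc; simpa using hc
    | succ j ih =>
      intro c hc
      have := hC (Submodule.mem_map_of_mem (ih c hc))
      have e : (entrywiseR (n := n) θ.toRingEquiv) (fun i => (θ ^ j) (c i))
          = fun i => (θ ^ (j + 1)) (c i) := by
        funext i
        rw [pow_succ']
        rfl
      rwa [e] at this
  have hall : ∀ (σ : E ≃ₐ[F] E) (c : Fin n → E), c ∈ C → (fun i => σ (c i)) ∈ C := by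
    intro σ c hc
    have : σ ∈ Submonoid.powers θ := mem_powers_iff_mem_zpowers.2 (hθ σ)
    obtain ⟨j, rfl⟩ := this
    exact hpow j c hc
  apply le_antisymm
  · apply Submodule.span_le.2
    rintro v ⟨hv, -⟩
    exact hv
  · intro c hc
    by_contra hcW
    obtain ⟨f, hfc, hfW⟩ := Submodule.exists_le_ker_of_notMem hcW
    have key : ∀ a : E, ∑ σ : E ≃ₐ[F] E, f (fun i => σ (c i)) * σ a = 0 := by
      intro a
      have hm : (fun i => algebraMap F E (Algebra.trace F E (a * c i))) ∈
          Submodule.span E {v | v ∈ C ∧ ∃ w : Fin n → F, v = fun i => algebraMap F E (w i)} := by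
        apply Submodule.subset_span
        refine ⟨?_, _, rfl⟩
        have e : (fun i => algebraMap F E (Algebra.trace F E (a * c i)))
            = ∑ σ : E ≃ₐ[F] E, (fun i => σ ((a • c) i)) := by
          funext i
          rw [trace_eq_sum_automorphisms, Finset.sum_apply]
          rfl
        rw [e]
        exact Submodule.sum_mem _ fun σ _ => hall σ _ (C.smul_mem a hc)
      have h0 := hfW hm
      have e : (fun i => algebraMap F E (Algebra.trace F E (a * c i)))
            = ∑ σ : E ≃ₐ[F] E, σ a • (fun i => σ (c i)) := by
        funext i
        rw [trace_eq_sum_automorphisms, Finset.sum_apply]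
        simp
      rw [LinearMap.mem_ker, e, map_sum] at h0
      rw [← h0]
      refine Finset.sum_congr rfl fun σ _ => ?_
      rw [map_smul, smul_eq_mul, mul_comm]
    have hli := linearIndependent_monoidHom E E
    have hinj : Function.Injective (fun σ : E ≃ₐ[F] E => ((σ : E →+* E) : E →* E)) := by
      intro σ τ h
      ext x
      exact DFunLike.congr_fun h x
    have hli2 := hli.comp _ hinj
    rw [Fintype.linearIndependent_iff] at hli2
    have := hli2 (fun σ => f (fun i => σ (c i))) (by
      funext a
      simpa [Finset.sum_apply] using key a) 1
    exact hfc (by simpa using this)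

lemma rank_cond {F : Type} [Field F] [Algebra F E] [Fintype F] [Fintype E] {n : ℕ}
    (θ : E ≃ₐ[F] E) (t : ℕ) (g : Fin n → E)
    (hr : Module.finrank F (Submodule.span F (Set.range g)) ≤ t)
    (ht : t ≤ Module.finrank E (Gab θ t g)) :
    (Gab θ t g).map (entrywiseR (n := n) θ.toRingEquiv) ≤ Gab θ t g := by
  have : FiniteDimensional F E := Module.Finite.of_finite
  let u := Module.finBasis F (Submodule.span F (Set.range g))
  let A : Fin n → (Fin (Module.finrank F (Submodule.span F (Set.range g)))) → F :=
    fun i j => u.repr ⟨g i, Submodule.subset_span ⟨i, rfl⟩⟩ j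
  have hg : ∀ i, g i = ∑ j, (u j : E) * algebraMap F E (A i j) := by
    intro i
    have := congrArg Subtype.val (u.sum_repr ⟨g i, Submodule.subset_span ⟨i, rfl⟩⟩)
    refine (show _ = g i from this).symm.trans ?_
    rw [AddSubmonoidClass.coe_finset_sum]
    refine Finset.sum_congr rfl fun j _ => ?_
    rw [Submodule.coe_smul, Algebra.smul_def, mul_comm]
  let v : (Fin (Module.finrank F (Submodule.span F (Set.range g)))) → Fin n → E :=
    fun j i => algebraMap F E (A i j)
  have hle : Gab θ t g ≤ Submodule.span E (Set.range v) := by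
    apply Submodule.span_le.2
    rintro _ ⟨l, rfl⟩
    have e : (fun i => (θ ^ (l : ℕ)) (g i)) = ∑ j, ((θ ^ (l : ℕ)) (u j : E)) • v j := by
      funext i
      rw [hg i, map_sum, Finset.sum_apply]
      refine Finset.sum_congr rfl fun j _ => ?_
      rw [map_mul, AlgEquiv.commutes]
      rfl
    show (fun i => (θ ^ (l : ℕ)) (g i)) ∈ _
    rw [e]
    exact Submodule.sum_mem _ fun j _ => Submodule.smul_mem _ _ (Submodule.subset_span ⟨j, rfl⟩)
  have hd : Module.finrank E (Submodule.span E (Set.range v)) ≤ t := by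
    refine (finrank_range_le_card (R := E) v).trans ?_
    simpa using hr
  rw [Submodule.eq_of_le_of_finrank_le hle (hd.trans ht), Submodule.map_le_iff_le_comap]
  apply Submodule.span_le.2
  rintro _ ⟨j, rfl⟩
  have e : entrywiseR (n := n) θ.toRingEquiv (v j) = v j := by
    funext i
    exact θ.commutes _
  rw [SetLike.mem_coe, Submodule.mem_comap, e]
  exact Submodule.subset_span ⟨j, rfl⟩

lemma rank_one {F : Type} [Field F] [Algebra F E] {n : ℕ} (w : Fin n → F)
    (hw : (fun i => algebraMap F E (w i)) ≠ 0) :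
    Module.finrank F (Submodule.span F (Set.range fun i => algebraMap F E (w i))) = 1 := by
  have : Submodule.span F (Set.range fun i => algebraMap F E (w i)) = Submodule.span F {1} := by
    apply le_antisymm
    · apply Submodule.span_le.2
      rintro _ ⟨i, rfl⟩
      exact Submodule.mem_span_singleton.2 ⟨w i, by simp [Algebra.smul_def]⟩
    · obtain ⟨i, hi⟩ := Function.ne_iff.1 hw
      have hi' : w i ≠ 0 := fun h => hi (by simp [h])
      rw [Submodule.span_singleton_le_iff_mem]
      have := Submodule.smul_mem (Submodule.span F (Set.range fun i => algebraMap F E (w i)))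
        (w i)⁻¹ (Submodule.subset_span ⟨i, rfl⟩)
      rwa [Algebra.smul_def, ← map_mul, inv_mul_cancel₀ hi', map_one] at this
  rw [this, finrank_span_singleton one_ne_zero]

/-- if `dim(C + θ(C)) = k+1` then `C = C₁ ⊕ G_{t,θ}(g)` with
`rk_q(g) > t` and `C₁` a `(k−t)`-dimensional subcode with a basis of vectors of
q-rank 1. -/
theorem stmt19 {F : Type} [Field F] [Algebra F E] [Fintype F] [Fintype E]
    (q m n k : ℕ) (hq : IsPrimePow q)
    (hF : Fintype.card F = q) (hE : Fintype.card E = q ^ m)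
    (hk : 0 < k) (hkn : k < n) (hnm : n ≤ m)
    (θ : E ≃ₐ[F] E) (hθ : ∀ τ : E ≃ₐ[F] E, τ ∈ Subgroup.zpowers θ)
    (C : Submodule E (Fin n → E)) (hC : Module.finrank E C = k)
    (hs1 : Module.finrank E (sumCode θ 1 C) = k + 1) :
    ∃ (t : ℕ) (g : Fin n → E) (C₁ : Submodule E (Fin n → E)),
      t ≤ k ∧
      t < Module.finrank F (Submodule.span F (Set.range g)) ∧
      Module.finrank E C₁ = k - t ∧
      (∃ b : Fin (k - t) → (Fin n → E),
        LinearIndependent E b ∧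
        Submodule.span E (Set.range b) = C₁ ∧
        ∀ i, Module.finrank F (Submodule.span F (Set.range (b i))) = 1) ∧
      Disjoint C₁ (Gab θ t g) ∧
      C₁ ⊔ Gab θ t g = C := by
  have hsum : sumCode θ 1 C = C ⊔ C.map (entrywiseR (n := n) θ.toRingEquiv) := by
    have h0 : mapCode (θ ^ 0) C = C := by
      ext x
      constructor
      · rintro ⟨y, hy, rfl⟩
        exact hy
      · intro hx
        exact ⟨x, hx, rfl⟩
    have h1 : mapCode (θ ^ 1) C = C.map (entrywiseR (n := n) θ.toRingEquiv) := by
      rw [pow_one]; rfl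
    rw [← h1]
    unfold sumCode
    apply le_antisymm
    · apply iSup_le
      intro j
      fin_cases j
      · exact le_trans (le_of_eq h0) le_sup_left
      · exact le_sup_right
    · apply sup_le
      · exact (le_of_eq h0.symm).trans (le_iSup (fun j : Fin (1 + 1) => mapCode (θ ^ (j : ℕ)) C) 0)
      · exact le_iSup (fun j : Fin (1 + 1) => mapCode (θ ^ (j : ℕ)) C) 1
  rw [hsum] at hs1
  obtain ⟨t, g, C₁, hst, ht, hsup, hdim⟩ := code_decomp θ k C hC hs1
  have hGle : Module.finrank E (Gab θ t g) ≤ t := by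
    refine (finrank_range_le_card (R := E) _).trans ?_
    simp
  have hadd := Submodule.finrank_sup_add_finrank_inf_eq C₁ (Gab θ t g)
  rw [hsup, hC] at hadd
  have hdesc := descent θ hθ C₁ hst
  have hC1 : Module.finrank E C₁ = k - t := by omega
  refine ⟨t, g, C₁, by omega, ?_, hC1, ?_, ?_, hsup⟩
  · by_contra hcon
    have hG := rank_cond θ t g (by omega) (by omega)
    have hCs : C.map (entrywiseR (n := n) θ.toRingEquiv) ≤ C := by
      rw [← hsup, Submodule.map_sup]
      exact sup_le_sup hst hG
    rw [sup_eq_left.2 hCs] at hs1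
    omega
  · have hfs := Submodule.exists_fun_fin_finrank_span_eq E
      {v | v ∈ C₁ ∧ ∃ w : Fin n → F, v = fun i => algebraMap F E (w i)}
    rw [hdesc, hC1] at hfs
    obtain ⟨b, hb, hbs, hbi⟩ := hfs
    refine ⟨b, hbi, hbs, fun i => ?_⟩
    obtain ⟨-, w, hw⟩ := hb i
    have hne := hbi.ne_zero i
    rw [hw] at hne ⊢
    exact rank_one w hne
  · rw [disjoint_iff, ← Submodule.finrank_eq_zero (R := E)]
    omega
end
end
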